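/- Let X and Y be Polish spaces. The mutual information functional μ ↦ I(μ) := D(μ ‖ μ_X ⊗ μ_Y), defined on Borel probability measures μ on X × Y (where μ_X, μ_Y are the marginals of μ and D(·‖·) is relative entropy, taking values in [0, ∞]), is sequentially lower semicontinuous with respect to weak convergence: if μ_k → μ weakly, then liminf_k I(μ_k) ≥ I(μ). -/

import Mathlib

open MeasureTheory Filter

/-- Relative entropy (Kullback–Leibler divergence) `D(μ‖ν)`, with values in `(-∞, ∞]`:
`∫ log(dμ/dν) dμ` if `μ ≪ ν` (and the log-likelihood ratio is `μ`-integrable), `+∞`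
otherwise. -/
noncomputable def klDivergence {Z : Type*} [MeasurableSpace Z] (μ ν : Measure Z) : EReal :=
  open scoped Classical in
  if μ ≪ ν ∧ Integrable (llr μ ν) μ then ((∫ z, llr μ ν z ∂μ : ℝ) : EReal) else ⊤

/-- The mutual information of a joint probability measure `μ` on `X × Y`: the relative
entropy of `μ` with respect to the product of its own marginals. -/
noncomputable def mutualInfoM {X Y : Type*} [MeasurableSpace X] [MeasurableSpace Y]
    (μ : Measure (X × Y)) : EReal :=
  klDivergence μ ((μ.map Prod.fst).prod (μ.map Prod.snd))

section Helpers

open InformationTheory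
open scoped BoundedContinuousFunction ENNReal

lemma aux_integrable {Z : Type*} [MeasurableSpace Z] (μ : Measure Z) [IsFiniteMeasure μ]
    (f : Z → ℝ) (hf : Measurable f) (M : ℝ) (hM : ∀ z, |f z| ≤ M) : Integrable f μ :=
  Integrable.of_bound hf.aestronglyMeasurable M (ae_of_all _ hM)

lemma aux_integrable_exp {Z : Type*} [MeasurableSpace Z] (μ : Measure Z) [IsFiniteMeasure μ]
    (f : Z → ℝ) (hf : Measurable f) (M : ℝ) (hM : ∀ z, |f z| ≤ M) :
    Integrable (fun z => Real.exp (f z)) μ :=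
  aux_integrable μ _ (by fun_prop) (Real.exp M) fun z => by
    rw [abs_of_pos (Real.exp_pos _)]
    exact Real.exp_le_exp.2 ((le_abs_self _).trans (hM z))

/-- Young's inequality for the relative entropy. -/
lemma aux_young (r f : ℝ) (hr : 0 ≤ r) : r * f - Real.exp f + 1 ≤ klFun r := by
  rw [klFun_apply]
  rcases hr.eq_or_lt with rfl | hr
  · simp [(Real.exp_pos f).le]
  · have h := Real.add_one_le_exp (f - Real.log r)
    rw [Real.exp_sub, Real.exp_log hr, le_div_iff₀ hr] at h
    nlinarith

lemma aux_lower {Z : Type*} [MeasurableSpace Z] (μ ν : Measure Z) [IsProbabilityMeasure μ]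
    [IsProbabilityMeasure ν] (f : Z → ℝ) (hf : Measurable f) (M : ℝ) (hM : ∀ z, |f z| ≤ M) :
    ((∫ z, f z ∂μ - ∫ z, Real.exp (f z) ∂ν + 1 : ℝ) : EReal) ≤ klDivergence μ ν := by
  unfold klDivergence
  split_ifs with h
  · rw [EReal.coe_le_coe_iff]
    obtain ⟨hac, hint⟩ := h
    have h1 := integral_klFun_rnDeriv hac hint
    simp only [probReal_univ, add_sub_cancel_right] at h1
    rw [← h1]
    have i1 : Integrable (fun z => (μ.rnDeriv ν z).toReal * f z) ν := by
      have := (integrable_rnDeriv_smul_iff (f := f) hac).2 (aux_integrable μ f hf M hM)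
      simpa [smul_eq_mul] using this
    have i2 := aux_integrable_exp ν f hf M hM
    have e1 : ∫ z, (μ.rnDeriv ν z).toReal * f z ∂ν = ∫ z, f z ∂μ := integral_rnDeriv_smul hac
    have e2 : ∫ z, ((μ.rnDeriv ν z).toReal * f z - Real.exp (f z) + 1) ∂ν
        = ∫ z, f z ∂μ - ∫ z, Real.exp (f z) ∂ν + 1 := by
      rw [integral_add (by exact i1.sub i2) (integrable_const _), integral_sub i1 i2, e1]
      simp
    rw [← e2]
    refine integral_mono ((i1.sub i2).add (integrable_const _))
      ((integrable_klFun_rnDeriv_iff hac).2 hint) fun z => ?_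
    exact aux_young _ _ ENNReal.toReal_nonneg
  · exact le_top

/-- Truncation to `[1/(n+1), n+1]`. -/
noncomputable def auxClamp (n : ℕ) (r : ℝ) : ℝ := max ((n + 1 : ℝ)⁻¹) (min r (n + 1))

lemma auxClamp_pos (n : ℕ) (r : ℝ) : 0 < auxClamp n r :=
  lt_of_lt_of_le (by positivity) (le_max_left _ _)

lemma aux_inv_le (n : ℕ) : ((n : ℝ) + 1)⁻¹ ≤ 1 :=
  inv_le_one_of_one_le₀ (by linarith [n.cast_nonneg (α := ℝ)])

lemma aux_log_bound (n : ℕ) (r : ℝ) : |Real.log (auxClamp n r)| ≤ Real.log (n + 1) := by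
  have h0 := aux_inv_le n
  have hn := n.cast_nonneg (α := ℝ)
  rw [abs_le]
  constructor
  · rw [← Real.log_inv]
    exact Real.log_le_log (by positivity) (le_max_left _ _)
  · exact Real.log_le_log (auxClamp_pos n r) (max_le (by linarith) (min_le_right _ _))

lemma aux_clamp_nonneg (n : ℕ) (r : ℝ) :
    0 ≤ r * Real.log (auxClamp n r) - auxClamp n r + 1 := by
  have hk := klFun_nonneg (auxClamp_pos n r).le
  rw [klFun_apply] at hk
  have h0 := aux_inv_le n
  have hn := n.cast_nonneg (α := ℝ)
  suffices auxClamp n r * Real.log (auxClamp n r) ≤ r * Real.log (auxClamp n r) by linarith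
  rcases le_total r ((n + 1 : ℝ)⁻¹) with h | h
  · have e : auxClamp n r = (n + 1 : ℝ)⁻¹ := max_eq_left ((min_le_left _ _).trans h)
    rw [e]
    exact mul_le_mul_of_nonpos_right h (Real.log_nonpos (by positivity) h0)
  · rcases le_total r (n + 1) with h' | h'
    · have e : auxClamp n r = r := by rw [auxClamp, min_eq_left h', max_eq_right h]
      rw [e]
    · have e : auxClamp n r = n + 1 := by
        rw [auxClamp, min_eq_right h', max_eq_right (by linarith)]
      rw [e]
      exact mul_le_mul_of_nonneg_right h' (Real.log_nonneg (by linarith))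

lemma aux_clamp_tendsto (r : ℝ) (hr : 0 ≤ r) :
    Tendsto (fun n : ℕ => r * Real.log (auxClamp n r) - auxClamp n r + 1) atTop
      (nhds (klFun r)) := by
  have hinv : Tendsto (fun n : ℕ => ((n : ℝ) + 1)⁻¹) atTop (nhds 0) := by
    simpa using tendsto_one_div_add_atTop_nhds_zero_nat (𝕜 := ℝ)
  rcases hr.eq_or_lt with rfl | hr
  · have e : ∀ n : ℕ, auxClamp n 0 = ((n : ℝ) + 1)⁻¹ := fun n =>
      max_eq_left ((min_le_left _ _).trans (by positivity))
    simp only [e, zero_mul, klFun_zero]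
    simpa using (hinv.const_sub 0).add_const 1
  · refine tendsto_const_nhds.congr' ?_
    filter_upwards [hinv.eventually_le_const hr, eventually_ge_atTop ⌈r⌉₊] with n h1 h2
    have h3 : r ≤ n := Nat.ceil_le.1 h2
    have e : auxClamp n r = r := by rw [auxClamp, min_eq_left (by linarith), max_eq_right h1]
    rw [e, klFun_apply]
    ring

lemma aux_upper {Z : Type*} [MeasurableSpace Z] (μ ν : Measure Z) [IsProbabilityMeasure μ]
    [IsProbabilityMeasure ν] (c : ℝ) (hc : (c : EReal) < klDivergence μ ν) :
    ∃ (f : Z → ℝ) (M : ℝ), Measurable f ∧ (∀ z, |f z| ≤ M) ∧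
      c < ∫ z, f z ∂μ - ∫ z, Real.exp (f z) ∂ν + 1 := by
  by_cases hac : μ ≪ ν
  · rcases lt_or_ge c 0 with hc0 | hc0
    · exact ⟨fun _ => 0, 0, measurable_const, by simp, by simpa using hc0⟩
    have hmain : ENNReal.ofReal c
        < ∫⁻ x, ENNReal.ofReal (klFun (μ.rnDeriv ν x).toReal) ∂ν := by
      rw [← klDiv_eq_lintegral_klFun_of_ac hac]
      by_cases hint : Integrable (llr μ ν) μ
      · rw [klDivergence, if_pos ⟨hac, hint⟩, EReal.coe_lt_coe_iff] at hc
        rw [klDiv_of_ac_of_integrable hac hint]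
        simp only [probReal_univ, add_sub_cancel_right]
        exact (ENNReal.ofReal_lt_ofReal_iff (hc0.trans_lt hc)).2 hc
      · rw [klDiv_of_not_integrable hint]
        exact ENNReal.ofReal_lt_top
    let φ : ℕ → Z → ℝ := fun n x => (μ.rnDeriv ν x).toReal *
      Real.log (auxClamp n (μ.rnDeriv ν x).toReal) - auxClamp n (μ.rnDeriv ν x).toReal + 1
    have hcl : ∀ n : ℕ, Measurable (fun x => auxClamp n (μ.rnDeriv ν x).toReal) := by
      intro n
      unfold auxClamp
      fun_prop
    have hφm : ∀ n, Measurable (φ n) := by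
      intro n
      have := hcl n
      have h2 := (μ.measurable_rnDeriv ν).ennreal_toReal
      exact ((h2.mul (Real.measurable_log.comp this)).sub this).add_const 1
    have hlim : ∀ x, liminf (fun n => ENNReal.ofReal (φ n x)) atTop
        = ENNReal.ofReal (klFun (μ.rnDeriv ν x).toReal) := fun x =>
      (ENNReal.tendsto_ofReal (aux_clamp_tendsto _ ENNReal.toReal_nonneg)).liminf_eq
    have hfat := lintegral_liminf_le (μ := ν) (u := atTop) (f := fun n x => ENNReal.ofReal (φ n x))
      (fun n => (hφm n).ennreal_ofReal)
    simp only [hlim] at hfat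
    obtain ⟨n, hn⟩ := (eventually_lt_of_lt_liminf (hmain.trans_le hfat)).exists
    have hm : Measurable (fun x => Real.log (auxClamp n (μ.rnDeriv ν x).toReal)) :=
      Real.measurable_log.comp (hcl n)
    have hb := fun x => aux_log_bound n (μ.rnDeriv ν x).toReal
    refine ⟨_, _, hm, hb, ?_⟩
    have i1 : Integrable (fun z => (μ.rnDeriv ν z).toReal *
        Real.log (auxClamp n (μ.rnDeriv ν z).toReal)) ν := by
      have := (integrable_rnDeriv_smul_iff hac).2 (aux_integrable μ _ hm _ hb)
      simpa [smul_eq_mul] using this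
    have i2 := aux_integrable_exp ν _ hm _ hb
    simp only [Real.exp_log (auxClamp_pos _ _)] at i2 ⊢
    have e1 : ∫ z, (μ.rnDeriv ν z).toReal *
        Real.log (auxClamp n (μ.rnDeriv ν z).toReal) ∂ν
        = ∫ z, Real.log (auxClamp n (μ.rnDeriv ν z).toReal) ∂μ := integral_rnDeriv_smul hac
    have iφ : Integrable (φ n) ν := (i1.sub i2).add (integrable_const _)
    have e2 : ∫ z, φ n z ∂ν = ∫ z, Real.log (auxClamp n (μ.rnDeriv ν z).toReal) ∂μ
        - ∫ z, auxClamp n (μ.rnDeriv ν z).toReal ∂ν + 1 := by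
      simp only [φ]
      rw [integral_add (by exact i1.sub i2) (integrable_const _), integral_sub i1 i2, e1]
      simp
    rw [← ofReal_integral_eq_lintegral_ofReal iφ (ae_of_all _ fun x => aux_clamp_nonneg _ _)]
      at hn
    rw [← e2]
    exact ENNReal.ofReal_lt_ofReal_iff_of_nonneg hc0 |>.1 hn
  · obtain ⟨A, hA, hν, hμ⟩ : ∃ A, MeasurableSet A ∧ ν A = 0 ∧ μ A ≠ 0 := by
      by_contra! h
      exact hac (Measure.AbsolutelyContinuous.mk h)
    have hpos : 0 < μ.real A := ENNReal.toReal_pos hμ (measure_ne_top _ _)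
    obtain ⟨t, ht⟩ : ∃ t : ℝ, c < t * μ.real A := ⟨(c + 1) / μ.real A, by
      rw [div_mul_cancel₀ _ hpos.ne']; linarith⟩
    refine ⟨A.indicator fun _ => t, |t|, measurable_const.indicator hA, fun z => ?_, ?_⟩
    · by_cases hz : z ∈ A <;> simp [hz]
    · have e : ∫ z, Real.exp (A.indicator (fun _ => t) z) ∂ν = 1 := by
        have : (fun z => Real.exp (A.indicator (fun _ => t) z)) =ᵐ[ν] fun _ => 1 := by
          have hA0 : ∀ᵐ z ∂ν, z ∉ A := measure_eq_zero_iff_ae_notMem.1 hν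
          filter_upwards [hA0] with z hz
          simp [hz]
        rw [integral_congr_ae this]
        simp
      rw [e, integral_indicator_const _ hA, smul_eq_mul]
      linarith

lemma aux_exp_lip (M a b : ℝ) (hb : |b| ≤ M) :
    Real.exp b - Real.exp a ≤ Real.exp M * |a - b| := by
  have h := Real.add_one_le_exp (a - b)
  have e : Real.exp a = Real.exp b * Real.exp (a - b) := by rw [← Real.exp_add]; ring_nf
  have hb' : Real.exp b ≤ Real.exp M := Real.exp_le_exp.2 ((le_abs_self _).trans hb)
  have hp := Real.exp_pos b
  have h3 : -(a - b) ≤ |a - b| := neg_le_abs _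
  have h1 : Real.exp b - Real.exp a ≤ Real.exp b * |a - b| := by
    rw [e]; nlinarith
  exact h1.trans (mul_le_mul_of_nonneg_right hb' (abs_nonneg _))

lemma aux_clip (M a b : ℝ) (ha : |a| ≤ M) :
    |a - max (-M) (min b M)| ≤ |a - b| ∧ |max (-M) (min b M)| ≤ M := by
  obtain ⟨h1, h2⟩ := abs_le.1 ha
  have e : max (-M) (min a M) = a := by rw [min_eq_left h2, max_eq_right h1]
  constructor
  · calc |a - max (-M) (min b M)| = |max (-M) (min a M) - max (-M) (min b M)| := by rw [e]
      _ ≤ |min a M - min b M| := by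
          simpa using abs_max_sub_max_le_max (-M) (min a M) (-M) (min b M)
      _ ≤ |a - b| := by simpa using abs_min_sub_min_le_max a M b M
  · exact abs_le.2 ⟨le_max_left _ _, max_le (by linarith) (min_le_right _ _)⟩

lemma aux_cont {Z : Type*} [TopologicalSpace Z] [PolishSpace Z] [MeasurableSpace Z]
    [BorelSpace Z] (μ ν : Measure Z) [IsProbabilityMeasure μ]
    [IsProbabilityMeasure ν] (c : ℝ) (hc : (c : EReal) < klDivergence μ ν) :
    ∃ (f : Z → ℝ) (M : ℝ), Continuous f ∧ (∀ z, |f z| ≤ M) ∧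
      c < ∫ z, f z ∂μ - ∫ z, Real.exp (f z) ∂ν + 1 := by
  obtain ⟨f, M, hf, hM, hlt⟩ := aux_upper μ ν c hc
  set δ := (∫ z, f z ∂μ - ∫ z, Real.exp (f z) ∂ν + 1) - c with hδ
  have hδ0 : 0 < δ := by linarith
  set K := 1 + Real.exp M with hK
  have hK0 : 0 < K := by positivity
  obtain ⟨g, hg, hgi⟩ := (aux_integrable (μ + ν) f hf M hM).exists_boundedContinuous_integral_sub_le
    (ε := δ / (2 * K)) (by positivity)
  let k : Z → ℝ := fun z => max (-M) (min (g z) M)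
  have hkc : Continuous k := by fun_prop
  have hkM : ∀ z, |k z| ≤ M := fun z => (aux_clip M (f z) (g z) (hM z)).2
  have hkm : Measurable k := hkc.measurable
  refine ⟨k, M, hkc, hkM, ?_⟩
  have hd : ∀ ρ : Measure Z, IsFiniteMeasure ρ → Integrable (fun z => |f z - k z|) ρ :=
    fun ρ _ => ((aux_integrable ρ f hf M hM).sub (aux_integrable ρ k hkm M hkM)).abs
  have hsum : ∫ z, |f z - k z| ∂μ + ∫ z, |f z - k z| ∂ν ≤ δ / (2 * K) := by
    rw [← integral_add_measure (hd μ inferInstance) (hd ν inferInstance)]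
    refine le_trans (integral_mono (hd _ inferInstance) ?_ fun z => ?_) hg
    · exact ((aux_integrable (μ + ν) f hf M hM).sub hgi).norm
    · exact (aux_clip M (f z) (g z) (hM z)).1
  have h1 : ∫ z, f z ∂μ - ∫ z, k z ∂μ ≤ ∫ z, |f z - k z| ∂μ := by
    rw [← integral_sub (aux_integrable μ f hf M hM) (aux_integrable μ k hkm M hkM)]
    exact integral_mono ((aux_integrable μ f hf M hM).sub (aux_integrable μ k hkm M hkM))
      (hd μ inferInstance) fun z => le_abs_self _
  have h2 : ∫ z, Real.exp (k z) ∂ν - ∫ z, Real.exp (f z) ∂ν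
      ≤ Real.exp M * ∫ z, |f z - k z| ∂ν := by
    have i1 := aux_integrable_exp ν f hf M hM
    have i2 := aux_integrable_exp ν k hkm M hkM
    rw [← integral_sub i2 i1, ← integral_const_mul]
    exact integral_mono (i2.sub i1) ((hd ν inferInstance).const_mul _) fun z =>
      aux_exp_lip M _ _ (hkM z)
  have p1 : 0 ≤ ∫ z, |f z - k z| ∂μ := integral_nonneg fun z => abs_nonneg _
  have p2 : 0 ≤ ∫ z, |f z - k z| ∂ν := integral_nonneg fun z => abs_nonneg _
  have h3 : K * (∫ z, |f z - k z| ∂μ + ∫ z, |f z - k z| ∂ν) ≤ δ / 2 := by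
    calc _ ≤ K * (δ / (2 * K)) := mul_le_mul_of_nonneg_left hsum hK0.le
      _ = δ / 2 := by field_simp
  have hE := Real.exp_pos M
  have h4 : ∫ z, |f z - k z| ∂μ + Real.exp M * ∫ z, |f z - k z| ∂ν
      ≤ K * (∫ z, |f z - k z| ∂μ + ∫ z, |f z - k z| ∂ν) := by
    rw [hK]; nlinarith [mul_nonneg hE.le p1]
  linarith

/-- Joint sequential lower semicontinuity of relative entropy. -/
lemma aux_lsc {Z : Type*} [TopologicalSpace Z] [PolishSpace Z] [MeasurableSpace Z]
    [BorelSpace Z] (μs νs : ℕ → ProbabilityMeasure Z) (μ ν : ProbabilityMeasure Z)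
    (hμ : Tendsto μs atTop (nhds μ)) (hν : Tendsto νs atTop (nhds ν)) :
    klDivergence μ.toMeasure ν.toMeasure
      ≤ liminf (fun k => klDivergence (μs k).toMeasure (νs k).toMeasure) atTop := by
  refine EReal.ge_of_forall_gt_iff_ge.1 fun c hc => ?_
  obtain ⟨f, M, hf, hM, hlt⟩ := aux_cont μ.toMeasure ν.toMeasure c hc
  let F : Z →ᵇ ℝ := BoundedContinuousFunction.ofNormedAddCommGroup f hf M hM
  let G : Z →ᵇ ℝ := BoundedContinuousFunction.ofNormedAddCommGroup
    (fun z => Real.exp (f z)) (by fun_prop) (Real.exp M) (fun z => by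
      rw [Real.norm_eq_abs, abs_of_pos (Real.exp_pos _)]
      exact Real.exp_le_exp.2 ((le_abs_self _).trans (hM z)))
  have t1 := ProbabilityMeasure.tendsto_iff_forall_integral_tendsto.1 hμ F
  have t2 := ProbabilityMeasure.tendsto_iff_forall_integral_tendsto.1 hν G
  have t := (t1.sub t2).add_const 1
  refine le_liminf_of_le (h := ?_)
  filter_upwards [t.eventually_const_lt hlt] with k hk
  refine le_trans ?_ (aux_lower (μs k).toMeasure (νs k).toMeasure f hf.measurable M hM)
  exact EReal.coe_le_coe_iff.2 hk.le

end Helpers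

/-- Let `X` and `Y` be Polish spaces.  The mutual information functional
`μ ↦ I(μ) = D(μ ‖ μ_X ⊗ μ_Y)` on Borel probability measures on `X × Y` is sequentially
lower semicontinuous for the topology of weak convergence: if `μ_k → μ` weakly then
`liminf_k I(μ_k) ≥ I(μ)`. -/
theorem stmt6
    {X Y : Type*}
    [TopologicalSpace X] [PolishSpace X] [MeasurableSpace X] [BorelSpace X]
    [TopologicalSpace Y] [PolishSpace Y] [MeasurableSpace Y] [BorelSpace Y]
    (μs : ℕ → ProbabilityMeasure (X × Y)) (μ : ProbabilityMeasure (X × Y))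
    (hconv : Tendsto μs atTop (nhds μ)) :
    mutualInfoM μ.toMeasure ≤ Filter.liminf (fun k => mutualInfoM (μs k).toMeasure) atTop := by
  have h1 := ProbabilityMeasure.tendsto_map_of_tendsto_of_continuous μs μ hconv
    (continuous_fst (X := X) (Y := Y))
  have h2 := ProbabilityMeasure.tendsto_map_of_tendsto_of_continuous μs μ hconv
    (continuous_snd (X := X) (Y := Y))
  have h3 := (ProbabilityMeasure.continuous_prod.tendsto _).comp (h1.prodMk_nhds h2)
  exact aux_lsc μs _ μ _ hconv h3
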